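/- (Main theorem: breaking the curse of dimensionality) Let Y be a Banach space and M : ℕ^d → Y satisfy ‖(Δ_mix M)(k)‖_Y ≤ ∏_{j=1}^d K_{j,1} exp(−β_j k_j)(k_j+1)^{β'_j} for all k ∈ ℕ^d, with K_{j,1} > 0, β_j > 0, β'_j ≥ 0, and let the work bounds be given by γ_j > 0, γ'_j ≥ 0, K_{j,2} > 0. Set ρ := max_j γ_j/β_j, J := {j : γ_j/β_j = ρ}, d* := |J|, β'* := Σ_{j∈J} β'_j, γ'* := Σ_{j∈J} γ'_j, K₁ := ∏_j K_{j,1}, K₂ := ∏_j K_{j,2}, for L > 0 let I_L := {k ∈ ℕ^d : Σ_j (β_j+γ_j)k_j ≤ L}, and let M_∞ := Σ_{k∈ℕ^d} (Δ_mix M)(k) (absolutely convergent). Then there exist a constant C > 0 depending only on β, γ, β', γ', d, and an ε₀ > 0 such that for every 0 < ε ≤ ε₀ there is an L > 0 with: (a) ‖S_{I_L}(M) − M_∞‖_Y ≤ ε, and (b) Σ_{k ∈ I_L} ∏_{j=1}^d K_{j,2} exp(γ_j k_j)(k_j+1)^{γ'_j} ≤ C K₁^ρ K₂ ε^{−ρ}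 |log ε|^{(d*−1)(1+ρ)+ρβ'*+γ'*}. -/

import Mathlib

open scoped Classical

/-- The `j`-th unidirectional difference operator:
`(Δ_j M)(k) = M(k) - M(k - e_j)` if `k j > 0`, and `(Δ_j M)(k) = M(k)` if `k j = 0`. -/
def diffOp {d : ℕ} {Y : Type*} [AddCommGroup Y] (j : Fin d) (M : (Fin d → ℕ) → Y) :
    (Fin d → ℕ) → Y :=
  fun k => if k j = 0 then M k else M k - M (Function.update k j (k j - 1))

/-- The mixed difference operator `Δ_mix = Δ_1 ∘ ⋯ ∘ Δ_d`. -/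
def mixDiff {d : ℕ} {Y : Type*} [AddCommGroup Y] (M : (Fin d → ℕ) → Y) :
    (Fin d → ℕ) → Y :=
  (List.finRange d).foldr (fun j F => diffOp j F) M

/-! Put `w = β + γ`, `a = 1 / (1 + ρ)` and `b = (γ - ρ β) / (1 + ρ)`, so that `b ≤ 0`, with
equality exactly on `J`. Then `-β = -a w + b` and `γ = ρ a w + b`: up to the factors
`exp (-a w·k)` and `exp (ρ a w·k)`, which depend on `w·k` only, the error and the work are
governed by the same weight `exp (b·k)`. A tail sum over `w·k > L` and a sum over the simplex
`w·k ≤ L` are both controlled by the sum of `exp (-c |w·k - L|) exp (b·k) ∏ (k_j + 1)^(p_j)` over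
all `k`. The coordinates outside `J` are damped by `exp (b·k)`, those in `J` range over an
interval of length `O(L)`, and one of them is pinned down by the hyperplane `w·k = L`; hence this
sum is `O(L^(#J - 1 + ∑_J p))`. The error is therefore at most of order `exp (-a L) L^P` and the
work at most of order `exp (ρ a L) L^R`, and the level `L` at which the error bound equals `ε`
gives work of order `ε^(-ρ) |log ε|^(ρ P + R)`. -/

open Filter Topology

section OneVariable

theorem one_add_rpow_le_mul_exp {p a u : ℝ} (hp : 0 ≤ p) (ha : 0 < a) (hu : 0 ≤ u) :
    (1 + u) ^ p ≤ (1 + p / a) ^ p * Real.exp (a * u) := by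
  set m := 1 + p / a with hm
  have hm1 : 1 ≤ m := by simp only [hm, le_add_iff_nonneg_right]; positivity
  have hpm : p / m ≤ a := by
    rw [div_le_iff₀ (by linarith), hm, mul_add, mul_div_cancel₀ _ ha.ne']
    linarith
  calc (1 + u) ^ p ≤ (m * Real.exp (u / m)) ^ p := by
        gcongr
        calc 1 + u ≤ m * (u / m + 1) := by rw [mul_add, mul_div_cancel₀ _ (by linarith)]; linarith
          _ ≤ m * Real.exp (u / m) := by gcongr; exact Real.add_one_le_exp _
    _ = m ^ p * Real.exp (p / m * u) := by
        rw [Real.mul_rpow (by linarith) (Real.exp_pos _).le, ← Real.exp_mul]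
        ring_nf
    _ ≤ m ^ p * Real.exp (a * u) := by gcongr

variable {a b p w : ℝ}

theorem exists_exp_mul_rpow_mul_exp_neg_max_le (hb : b ≤ 0) (hp : 0 ≤ p) (ha : 0 < a)
    (hw : 0 < w) :
    ∃ C > 0, ∀ L x : ℝ, 0 ≤ L → 0 ≤ x →
      Real.exp (b * x) * (x + 1) ^ p * Real.exp (-(a * max (w * x - L) 0)) ≤ C * (L + 1) ^ p := by
  refine ⟨(1 / w + 1) ^ p * (1 + p / a) ^ p, by positivity, fun L x hL hx => ?_⟩
  set u := max (w * x - L) 0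
  have hu : 0 ≤ u := le_max_right _ _
  have hx_le : x + 1 ≤ (1 / w + 1) * (L + 1) * (1 + u) := by
    have hx_le' : x ≤ 1 / w * (L + u) := by
      rw [one_div_mul_eq_div, le_div_iff₀ hw]
      linarith [le_max_left (w * x - L) 0]
    calc x + 1 ≤ (1 / w + 1) * (L + u + 1) := by linarith [one_div_pos.2 hw]
      _ ≤ (1 / w + 1) * ((L + 1) * (1 + u)) := by gcongr; nlinarith
      _ = _ := by ring
  have hexp : Real.exp (b * x) ≤ 1 :=
    Real.exp_le_one_iff.2 (mul_nonpos_of_nonpos_of_nonneg hb hx)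
  rw [Real.exp_neg, ← div_eq_mul_inv, div_le_iff₀ (Real.exp_pos _)]
  calc Real.exp (b * x) * (x + 1) ^ p ≤ (x + 1) ^ p := mul_le_of_le_one_left (by positivity) hexp
    _ ≤ ((1 / w + 1) * (L + 1) * (1 + u)) ^ p := by gcongr
    _ = (1 / w + 1) ^ p * (L + 1) ^ p * (1 + u) ^ p := by
        rw [Real.mul_rpow (by positivity) (by positivity),
          Real.mul_rpow (by positivity) (by positivity)]
    _ ≤ (1 / w + 1) ^ p * (L + 1) ^ p * ((1 + p / a) ^ p * Real.exp (a * u)) := by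
        gcongr
        exact one_add_rpow_le_mul_exp hp ha hu
    _ = _ := by ring

theorem summable_exp_neg_mul_abs_int {c : ℝ} (hc : 0 < c) :
    Summable fun m : ℤ => Real.exp (-(c * |(m : ℝ)|)) := by
  have h : Summable fun n : ℕ => Real.exp (n * -c) :=
    Real.summable_exp_nat_mul_iff.2 (neg_neg_of_pos hc)
  refine .of_nat_of_neg (h.congr fun n => ?_) (h.congr fun n => ?_) <;>
  simp [mul_comm]

theorem exists_sum_exp_neg_mul_abs_sub_le (ha : 0 < a) (hw : 0 < w) :
    ∃ C > 0, ∀ (y : ℝ) (T : Finset ℕ), ∑ x ∈ T, Real.exp (-(a * |w * x - y|)) ≤ C := by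
  have hs := summable_exp_neg_mul_abs_int (mul_pos ha hw)
  have hpos : 0 < ∑' m : ℤ, Real.exp (-(a * w * |(m : ℝ)|)) :=
    hs.tsum_pos (fun _ => by positivity) 0 (by positivity)
  refine ⟨Real.exp (a * w) * ∑' m : ℤ, Real.exp (-(a * w * |(m : ℝ)|)), by positivity,
    fun y T => ?_⟩
  set n : ℤ := ⌊y / w⌋
  have hny : |w * n - y| ≤ w := by
    have h₁ : n * w ≤ y := (le_div_iff₀ hw).1 (Int.floor_le _)
    have h₂ : y < (n + 1) * w := (div_lt_iff₀ hw).1 (Int.lt_floor_add_one _)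
    exact abs_le.2 ⟨by linarith, by linarith⟩
  have hdist (x : ℕ) : w * |((x - n : ℤ) : ℝ)| - w ≤ |w * x - y| := by
    have h := abs_sub_le (w * x) y (w * n)
    rw [← mul_sub, abs_mul, abs_of_pos hw, abs_sub_comm y] at h
    push_cast
    linarith
  calc ∑ x ∈ T, Real.exp (-(a * |w * x - y|))
      ≤ ∑ x ∈ T, Real.exp (a * w) * Real.exp (-(a * w * |((x - n : ℤ) : ℝ)|)) := by
        refine Finset.sum_le_sum fun x _ => ?_
        rw [← Real.exp_add, Real.exp_le_exp]
        linarith [mul_le_mul_of_nonneg_left (hdist x) ha.le]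
    _ = Real.exp (a * w) *
          ∑ m ∈ T.image fun x : ℕ => (x - n : ℤ), Real.exp (-(a * w * |(m : ℝ)|)) := by
        rw [← Finset.mul_sum, Finset.sum_image fun x _ x' _ h => by simpa using h]
    _ ≤ _ := by
        gcongr
        exact hs.sum_le_tsum _ fun _ _ => by positivity

theorem exists_sum_exp_neg_max_le (ha : 0 < a) (hw : 0 < w) :
    ∃ C > 0, ∀ (L : ℝ) (T : Finset ℕ), 0 ≤ L →
      ∑ x ∈ T, Real.exp (-(a * max (w * x - L) 0)) ≤ C * (L + 1) := by
  obtain ⟨C, hC, hsum⟩ := exists_sum_exp_neg_mul_abs_sub_le ha hw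
  refine ⟨1 / w + 1 + C, by positivity, fun L T hL => ?_⟩
  have hcard : ((T.filter fun x : ℕ => w * x ≤ L).card : ℝ) ≤ L / w + 1 := by
    have hsub : (T.filter fun x : ℕ => w * x ≤ L) ⊆ Finset.range (⌊L / w⌋₊ + 1) := fun x hx =>
      Finset.mem_range_succ_iff.2 <| Nat.le_floor <|
        (le_div_iff₀' hw).2 (Finset.mem_filter.1 hx).2
    calc ((T.filter fun x : ℕ => w * x ≤ L).card : ℝ) ≤ ⌊L / w⌋₊ + 1 := by
          exact_mod_cast (Finset.card_le_card hsub).trans_eq (Finset.card_range _)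
      _ ≤ L / w + 1 := by gcongr; exact Nat.floor_le (by positivity)
  calc ∑ x ∈ T, Real.exp (-(a * max (w * x - L) 0))
      ≤ ∑ x ∈ T, ((if w * x ≤ L then 1 else 0) + Real.exp (-(a * |w * x - L|))) := by
        refine Finset.sum_le_sum fun x _ => ?_
        split_ifs with hx
        · rw [max_eq_right (by linarith)]
          simp [Real.exp_nonneg]
        · rw [max_eq_left (by linarith), abs_of_nonneg (by linarith), zero_add]
    _ = (T.filter fun x : ℕ => w * x ≤ L).card + ∑ x ∈ T, Real.exp (-(a * |w * x - L|)) := by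
        rw [Finset.sum_add_distrib, Finset.sum_boole]
    _ ≤ L / w + 1 + C := add_le_add hcard (hsum L T)
    _ ≤ (1 / w + 1 + C) * (L + 1) := by
        have : 0 < 1 / w := by positivity
        rw [div_eq_mul_one_div]
        nlinarith

theorem summable_exp_mul_add_one_rpow (p : ℝ) (hb : b < 0) :
    Summable fun x : ℕ => Real.exp (b * x) * ((x : ℝ) + 1) ^ p := by
  obtain ⟨m, hm⟩ := exists_nat_ge p
  have h := (summable_nat_add_iff 1).2 (Real.summable_pow_mul_exp_neg_nat_mul m (neg_pos.2 hb))
  rw [neg_neg] at h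
  refine .of_nonneg_of_le (fun x => by positivity) (fun x => ?_) (h.mul_left (Real.exp (-b)))
  calc Real.exp (b * x) * ((x : ℝ) + 1) ^ p ≤ Real.exp (b * x) * ((x : ℝ) + 1) ^ (m : ℝ) := by
        gcongr
        simp
    _ = Real.exp (-b) * (((x + 1 : ℕ) : ℝ) ^ m * Real.exp (b * (x + 1 : ℕ))) := by
        rw [Real.rpow_natCast, mul_left_comm, ← Real.exp_add]
        push_cast
        ring_nf

theorem exists_sum_exp_mul_rpow_mul_exp_neg_max_le (hb : b ≤ 0) (hp : 0 ≤ p) (ha : 0 < a)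
    (hw : 0 < w) :
    ∃ C > 0, ∀ (L : ℝ) (T : Finset ℕ), 0 ≤ L →
      ∑ x ∈ T, Real.exp (b * x) * ((x : ℝ) + 1) ^ p * Real.exp (-(a * max (w * x - L) 0)) ≤
        C * (L + 1) ^ (1 + p) := by
  obtain ⟨A, hA, hsup⟩ := exists_exp_mul_rpow_mul_exp_neg_max_le hb hp (half_pos ha) hw
  obtain ⟨B, hB, hsum⟩ := exists_sum_exp_neg_max_le (half_pos ha) hw
  refine ⟨A * B, by positivity, fun L T hL => ?_⟩
  set E : ℕ → ℝ := fun x => Real.exp (-(a / 2 * max (w * x - L) 0))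
  calc _ = ∑ x ∈ T, Real.exp (b * x) * ((x : ℝ) + 1) ^ p * E x * E x := by
        refine Finset.sum_congr rfl fun x _ => ?_
        rw [mul_assoc _ (E x), ← Real.exp_add]
        ring_nf
    _ ≤ ∑ x ∈ T, A * (L + 1) ^ p * E x :=
        Finset.sum_le_sum fun x _ =>
          mul_le_mul_of_nonneg_right (hsup L x hL x.cast_nonneg) (Real.exp_pos _).le
    _ ≤ A * (L + 1) ^ p * (B * (L + 1)) := by
        rw [← Finset.mul_sum]
        gcongr
        exact hsum L T hL
    _ = _ := by rw [Real.rpow_add (by linarith), Real.rpow_one]; ring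

theorem exists_sum_exp_mul_rpow_mul_exp_neg_max_le_ite {P : Prop} [Decidable P] (hb : b ≤ 0)
    (hbP : ¬ P → b < 0) (hp : P → 0 ≤ p) (ha : 0 < a) (hw : 0 < w) :
    ∃ C > 0, ∀ (L : ℝ) (T : Finset ℕ), 0 ≤ L →
      ∑ x ∈ T, Real.exp (b * x) * ((x : ℝ) + 1) ^ p * Real.exp (-(a * max (w * x - L) 0)) ≤
        C * (L + 1) ^ (if P then 1 + p else 0) := by
  by_cases hP : P
  · simpa only [if_pos hP] using exists_sum_exp_mul_rpow_mul_exp_neg_max_le hb (hp hP) ha hw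
  · have hs := summable_exp_mul_add_one_rpow p (hbP hP)
    refine ⟨_, hs.tsum_pos (fun x => by positivity) 0 (by positivity), fun L T _ => ?_⟩
    rw [if_neg hP, Real.rpow_zero, mul_one]
    refine (Finset.sum_le_sum fun x _ => ?_).trans (hs.sum_le_tsum T fun x _ => by positivity)
    refine mul_le_of_le_one_right (by positivity) (Real.exp_le_one_iff.2 ?_)
    exact neg_nonpos.2 (by positivity)

end OneVariable

section Level

theorem eventually_add_mul_log_add_bounds (P A B : ℝ) :
    ∀ᶠ t : ℝ in atTop, 0 < t ∧ 0 < t + P * Real.log t + A ∧ t + P * Real.log t + A + B ≤ 2 * t := by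
  have hlog (c : ℝ) : (fun t => P * Real.log t + c) =o[atTop] (id : ℝ → ℝ) :=
    (Real.isLittleO_log_id_atTop.const_mul_left P).add
      (Asymptotics.isLittleO_const_id_atTop c)
  filter_upwards [eventually_gt_atTop 0, (hlog A).bound one_half_pos,
    (hlog (A + B)).bound one_half_pos] with t ht h₁ h₂
  rw [id, Real.norm_of_nonneg ht.le, Real.norm_eq_abs, abs_le] at h₁ h₂
  exact ⟨ht, by linarith, by linarith⟩

variable {a A P R : ℝ}

/-- Since `L + 1 ≤ (2 / a) * |log ε|` for small `ε`, it suffices to make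
`exp (-(a * L)) * |log ε| ^ P` a suitable multiple of `ε`. -/
theorem eventually_exists_level (ρ : ℝ) (ha : 0 < a) (hA : 0 < A) (hP : 0 ≤ P) (hR : 0 ≤ R) :
    ∀ᶠ ε in 𝓝[>] (0 : ℝ), ∃ L > 0, A * Real.exp (-(a * L)) * (L + 1) ^ P ≤ ε ∧
      Real.exp (ρ * a * L) * (L + 1) ^ R ≤
        (A * (2 / a) ^ P) ^ ρ * (2 / a) ^ R * ε ^ (-ρ) * |Real.log ε| ^ (ρ * P + R) := by
  set Q := A * (2 / a) ^ P with hQ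
  have hQ₀ : 0 < Q := by positivity
  have hlog : Tendsto (fun ε => |Real.log ε|) (𝓝[>] 0) atTop :=
    tendsto_abs_atBot_atTop.comp Real.tendsto_log_nhdsGT_zero
  filter_upwards [Ioo_mem_nhdsGT one_pos,
    hlog.eventually (eventually_add_mul_log_add_bounds P (Real.log Q) a)]
    with ε ⟨hε, hε_lt⟩ ⟨ht, hL, hLt⟩
  set t := |Real.log ε| with ht_def
  set L := Real.log (Q * t ^ P / ε) / a
  have haL : a * L = t + P * Real.log t + Real.log Q := by
    rw [mul_div_cancel₀ _ ha.ne', Real.log_div (by positivity) hε.ne',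
      Real.log_mul hQ₀.ne' (by positivity), Real.log_rpow ht, ht_def,
      abs_of_neg (Real.log_neg hε hε_lt)]
    ring
  have hexp : Real.exp (a * L) = Q * t ^ P / ε := by
    rw [mul_div_cancel₀ _ ha.ne', Real.exp_log (by positivity)]
  have hL₀ : 0 < L := pos_of_mul_pos_right (haL ▸ hL) ha.le
  have hpow {s : ℝ} (hs : 0 ≤ s) : (L + 1) ^ s ≤ (2 / a) ^ s * t ^ s := by
    rw [← Real.mul_rpow (by positivity) ht.le]
    refine Real.rpow_le_rpow (by positivity) ?_ hs
    rw [div_mul_eq_mul_div, le_div_iff₀' ha]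
    linarith
  refine ⟨L, hL₀, ?_, ?_⟩
  · calc A * Real.exp (-(a * L)) * (L + 1) ^ P
        ≤ A * Real.exp (-(a * L)) * ((2 / a) ^ P * t ^ P) := by gcongr; exact hpow hP
      _ = Q * t ^ P / Real.exp (a * L) := by rw [hQ, Real.exp_neg]; ring
      _ = ε := by rw [hexp, div_div_cancel₀ (by positivity)]
  · calc Real.exp (ρ * a * L) * (L + 1) ^ R
        ≤ Real.exp (ρ * a * L) * ((2 / a) ^ R * t ^ R) := by gcongr; exact hpow hR
      _ = (Q * t ^ P / ε) ^ ρ * ((2 / a) ^ R * t ^ R) := by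
          rw [← hexp, ← Real.exp_mul]
          ring_nf
      _ = Q ^ ρ * (2 / a) ^ R * ε ^ (-ρ) * t ^ (ρ * P + R) := by
          rw [Real.div_rpow (by positivity) hε.le, Real.mul_rpow hQ₀.le (by positivity),
            ← Real.rpow_mul ht.le, Real.rpow_add ht, Real.rpow_neg hε.le, mul_comm P]
          ring

end Level


section ExpPolyWeight

variable {ι : Type*} [Fintype ι]

/-- The product `∏ j, e^(b_j k_j) (k_j + 1)^(p_j)` of exponential rates with polynomial
corrections, which models the decay of mixed differences (`b < 0`) as well as the growth of the
work (`b > 0`). -/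
noncomputable def expPolyWeight (b p : ι → ℝ) (k : ι → ℕ) : ℝ :=
  ∏ j, Real.exp (b j * k j) * ((k j : ℝ) + 1) ^ p j

theorem expPolyWeight_nonneg (b p : ι → ℝ) (k : ι → ℕ) : 0 ≤ expPolyWeight b p k :=
  Finset.prod_nonneg fun _ _ => by positivity

theorem expPolyWeight_mul_add (s : ℝ) (w b p : ι → ℝ) (k : ι → ℕ) :
    expPolyWeight (fun j => s * w j + b j) p k =
      Real.exp (s * ∑ j, w j * k j) * expPolyWeight b p k := by
  rw [expPolyWeight, expPolyWeight, Finset.mul_sum, Real.exp_sum, ← Finset.prod_mul_distrib]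
  refine Finset.prod_congr rfl fun j _ => ?_
  rw [add_mul, Real.exp_add, mul_assoc, mul_assoc]

theorem prod_mul_exp_mul_rpow (K b p : ι → ℝ) (k : ι → ℕ) :
    ∏ j, K j * Real.exp (b j * k j) * ((k j : ℝ) + 1) ^ p j =
      (∏ j, K j) * expPolyWeight b p k := by
  simp only [mul_assoc, expPolyWeight, Finset.prod_mul_distrib]

theorem sum_mul_prod_subtype_ne_le [DecidableEq ι] (j₀ : ι) {h : (ι → ℕ) → ℝ} {A : ℝ}
    (hh : ∀ k, 0 ≤ h k) (hA : ∀ k (T : Finset ℕ), ∑ x ∈ T, h (Function.update k j₀ x) ≤ A)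
    {g : {j // j ≠ j₀} → ℕ → ℝ} {B : {j // j ≠ j₀} → ℝ} (hg : ∀ j x, 0 ≤ g j x)
    (hB : ∀ j (T : Finset ℕ), ∑ x ∈ T, g j x ≤ B j) (S : Finset (ι → ℕ)) :
    ∑ k ∈ S, h k * ∏ j, g j (k j) ≤ A * ∏ j, B j := by
  have hA₀ : 0 ≤ A := (hA 0 ∅).trans' (by simp)
  let e := Equiv.funSplitAt j₀ ℕ
  let T (j : ι) : Finset ℕ := S.image fun k => k j
  let box := T j₀ ×ˢ Fintype.piFinset fun j : {j // j ≠ j₀} => T j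
  let F (q : ℕ × ({j // j ≠ j₀} → ℕ)) : ℝ := h (e.symm q) * ∏ j, g j (q.2 j)
  have hF (q) : 0 ≤ F q := mul_nonneg (hh _) (Finset.prod_nonneg fun _ _ => hg _ _)
  have hsub : S.map e.toEmbedding ⊆ box := by
    intro q hq
    obtain ⟨k, hk, rfl⟩ := Finset.mem_map.1 hq
    exact Finset.mem_product.2 ⟨Finset.mem_image_of_mem _ hk,
      Fintype.mem_piFinset.2 fun j => Finset.mem_image_of_mem _ hk⟩
  have hupdate (x : ℕ) (k' : {j // j ≠ j₀} → ℕ) :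
      e.symm (x, k') = Function.update (e.symm (0, k')) j₀ x := by
    ext j
    by_cases hj : j = j₀
    · subst hj; simp [e]
    · simp [e, hj]
  calc ∑ k ∈ S, h k * ∏ j, g j (k j)
      = ∑ q ∈ S.map e.toEmbedding, F q := by
        simp only [Finset.sum_map, F, Equiv.coe_toEmbedding, Equiv.symm_apply_apply]
        rfl
    _ ≤ ∑ q ∈ box, F q := Finset.sum_le_sum_of_subset_of_nonneg hsub fun q _ _ => hF q
    _ = ∑ k' ∈ Fintype.piFinset fun j : {j // j ≠ j₀} => T j,
          (∑ x ∈ T j₀, h (Function.update (e.symm (0, k')) j₀ x)) * ∏ j, g j (k' j) := by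
        simp only [box, F, Finset.sum_product_right, Finset.sum_mul, ← hupdate]
    _ ≤ ∑ k' ∈ Fintype.piFinset fun j : {j // j ≠ j₀} => T j, A * ∏ j, g j (k' j) :=
        Finset.sum_le_sum fun k' _ =>
          mul_le_mul_of_nonneg_right (hA _ _) (Finset.prod_nonneg fun _ _ => hg _ _)
    _ = A * ∏ j : {j // j ≠ j₀}, ∑ x ∈ T j, g j x := by
        rw [← Finset.mul_sum, Finset.prod_univ_sum]
    _ ≤ A * ∏ j, B j := by
        refine mul_le_mul_of_nonneg_left (Finset.prod_le_prod ?_ fun j _ => hB j _) hA₀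
        exact fun j _ => Finset.sum_nonneg fun x _ => hg j x

theorem exp_neg_mul_abs_sub_le_prod {w : ι → ℝ} (hw : ∀ j, 0 ≤ w j) {a L : ℝ} (ha : 0 ≤ a)
    (k : ι → ℕ) :
    Real.exp (-(a * |∑ j, w j * k j - L|)) ≤
      ∏ j, Real.exp (-(a / Fintype.card ι * max (w j * k j - L) 0)) := by
  have hcoord (j : ι) : max (w j * k j - L) 0 ≤ |∑ i, w i * k i - L| := by
    refine max_le ((sub_le_sub_right ?_ L).trans (le_abs_self _)) (abs_nonneg _)
    exact Finset.single_le_sum (f := fun i => w i * (k i : ℝ))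
      (fun i _ => mul_nonneg (hw i) (Nat.cast_nonneg _)) (Finset.mem_univ j)
  have hsum : ∑ j, max (w j * k j - L) 0 ≤ Fintype.card ι * |∑ j, w j * k j - L| := by
    simpa using Finset.sum_le_card_nsmul Finset.univ _ _ fun j _ => hcoord j
  rw [← Real.exp_sum, Real.exp_le_exp, Finset.sum_neg_distrib, ← Finset.mul_sum, neg_le_neg_iff]
  calc a / Fintype.card ι * ∑ j, max (w j * k j - L) 0
      ≤ a / Fintype.card ι * (Fintype.card ι * |∑ j, w j * k j - L|) := by gcongr
    _ ≤ a * |∑ j, w j * k j - L| := by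
        rw [← mul_assoc, div_mul_comm]
        gcongr
        exact mul_le_of_le_one_left ha (div_self_le_one _)

theorem exp_neg_mul_abs_sub_mul_expPolyWeight_le {w : ι → ℝ} (hw : ∀ j, 0 ≤ w j) {a L : ℝ}
    (ha : 0 ≤ a) (b p : ι → ℝ) (k : ι → ℕ) :
    Real.exp (-(a * |∑ j, w j * k j - L|)) * expPolyWeight b p k ≤
      Real.exp (-(a / 2 * |∑ j, w j * k j - L|)) *
        ∏ j, Real.exp (b j * k j) * ((k j : ℝ) + 1) ^ p j *
          Real.exp (-(a / 2 / Fintype.card ι * max (w j * k j - L) 0)) := by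
  set E := Real.exp (-(a / 2 * |∑ j, w j * k j - L|))
  have hE : Real.exp (-(a * |∑ j, w j * k j - L|)) = E * E := by
    rw [← Real.exp_add]
    ring_nf
  rw [hE, mul_assoc, mul_comm E (expPolyWeight b p k), Finset.prod_mul_distrib]
  have := expPolyWeight_nonneg b p k
  exact mul_le_mul_of_nonneg_left (mul_le_mul_of_nonneg_left
    (exp_neg_mul_abs_sub_le_prod hw (by positivity) k) this) (Real.exp_pos _).le

theorem exists_sum_update_exp_neg_mul_abs_sub_le [DecidableEq ι] {w : ι → ℝ} {j₀ : ι}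
    (hw : 0 < w j₀) {a : ℝ} (ha : 0 < a) :
    ∃ C > 0, ∀ (L : ℝ) (k : ι → ℕ) (T : Finset ℕ),
      ∑ x ∈ T, Real.exp (-(a * |∑ j, w j * Function.update k j₀ x j - L|)) ≤ C := by
  obtain ⟨C, hC, hsum⟩ := exists_sum_exp_neg_mul_abs_sub_le ha hw
  refine ⟨C, hC, fun L k T => ?_⟩
  convert hsum (L - ∑ j : {j // j ≠ j₀}, w j * k j) T using 6 with x _
  have hne (j : {j // j ≠ j₀}) : Function.update k j₀ x j = k j := Function.update_of_ne j.2 _ _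
  simp only [Fintype.sum_eq_add_sum_subtype_ne _ j₀, Function.update_self, hne, sub_sub_eq_add_sub]

section Concentration

variable {w b p : ι → ℝ} {J : Finset ι}

theorem add_sum_subtype_ne_ite_mem [DecidableEq ι] {j₀ : ι} (hj₀ : j₀ ∈ J) :
    p j₀ + ∑ j : {j // j ≠ j₀}, (if j.1 ∈ J then 1 + p j else 0) =
      (J.card : ℝ) - 1 + ∑ j ∈ J, p j := by
  have h : ∑ j, (if j ∈ J then 1 + p j else 0) = (J.card : ℝ) + ∑ j ∈ J, p j := by
    simp [Finset.sum_add_distrib]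
  rw [Fintype.sum_eq_add_sum_subtype_ne _ j₀, if_pos hj₀] at h
  linarith

/-- Given the other coordinates, the hyperplane `∑ j, w j * k j = L` determines the coordinate
`j₀ ∈ J` up to a bounded error; this is where the `-1` in the exponent comes from. -/
theorem exists_sum_exp_neg_mul_abs_mul_expPolyWeight_le (hw : ∀ j, 0 < w j) (hb : ∀ j, b j ≤ 0)
    (hJ : J.Nonempty) (hbJ : ∀ j ∉ J, b j < 0) (hp : ∀ j ∈ J, 0 ≤ p j) {a : ℝ} (ha : 0 < a) :
    ∃ C > 0, ∀ (L : ℝ) (S : Finset (ι → ℕ)), 0 ≤ L →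
      ∑ k ∈ S, Real.exp (-(a * |∑ j, w j * k j - L|)) * expPolyWeight b p k ≤
        C * (L + 1) ^ ((J.card : ℝ) - 1 + ∑ j ∈ J, p j) := by
  obtain ⟨j₀, hj₀⟩ := hJ
  have : Nonempty ι := ⟨j₀⟩
  set a' := a / 2 / Fintype.card ι
  have ha' : 0 < a' := by positivity
  obtain ⟨A, hA, hsup⟩ := exists_exp_mul_rpow_mul_exp_neg_max_le (hb j₀) (hp j₀ hj₀) ha' (hw j₀)
  obtain ⟨B, hB, hslice⟩ := exists_sum_update_exp_neg_mul_abs_sub_le (hw j₀) (half_pos ha)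
  choose G hG hcoord using fun j =>
    exists_sum_exp_mul_rpow_mul_exp_neg_max_le_ite (hb j) (hbJ j) (hp j) ha' (hw j)
  refine ⟨A * (B * ∏ j : {j // j ≠ j₀}, G j),
    mul_pos hA (mul_pos hB (Finset.prod_pos fun j _ => hG j)), fun L S hL => ?_⟩
  let h (k : ι → ℕ) : ℝ := Real.exp (-(a / 2 * |∑ j, w j * k j - L|))
  let g (j : ι) (x : ℕ) : ℝ :=
    Real.exp (b j * x) * ((x : ℝ) + 1) ^ p j * Real.exp (-(a' * max (w j * x - L) 0))
  have hg (j x) : 0 ≤ g j x := by positivity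
  have hsplit (k : ι → ℕ) : Real.exp (-(a * |∑ j, w j * k j - L|)) * expPolyWeight b p k ≤
      A * (L + 1) ^ p j₀ * (h k * ∏ j : {j // j ≠ j₀}, g j (k j)) := by
    calc _ ≤ h k * ∏ j, g j (k j) :=
          exp_neg_mul_abs_sub_mul_expPolyWeight_le (fun j => (hw j).le) ha.le b p k
      _ = h k * (g j₀ (k j₀) * ∏ j : {j // j ≠ j₀}, g j (k j)) := by
          rw [Fintype.prod_eq_mul_prod_subtype_ne _ j₀]
      _ ≤ h k * (A * (L + 1) ^ p j₀ * ∏ j : {j // j ≠ j₀}, g j (k j)) := by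
          have : 0 ≤ ∏ j : {j // j ≠ j₀}, g j (k j) := Finset.prod_nonneg fun j _ => hg j _
          gcongr
          exact hsup L _ hL (k j₀).cast_nonneg
      _ = _ := mul_left_comm _ _ _
  calc _ ≤ A * (L + 1) ^ p j₀ * ∑ k ∈ S, h k * ∏ j : {j // j ≠ j₀}, g j (k j) := by
        rw [Finset.mul_sum]
        exact Finset.sum_le_sum fun k _ => hsplit k
    _ ≤ A * (L + 1) ^ p j₀ *
          (B * ∏ j : {j // j ≠ j₀}, G j * (L + 1) ^ (if j.1 ∈ J then 1 + p j else 0)) := by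
        gcongr
        exact sum_mul_prod_subtype_ne_le j₀ (fun k => (Real.exp_pos _).le) (hslice L)
          (fun j => hg j) (fun j T => hcoord j L T hL) S
    _ = _ := by
        rw [Finset.prod_mul_distrib, ← Real.rpow_sum_of_pos (by positivity),
          ← add_sum_subtype_ne_ite_mem hj₀, Real.rpow_add (by positivity)]
        ring

theorem exists_sum_expPolyWeight_le_of_forall_ge (hw : ∀ j, 0 < w j) (hb : ∀ j, b j ≤ 0)
    (hJ : J.Nonempty) (hbJ : ∀ j ∉ J, b j < 0) (hp : ∀ j ∈ J, 0 ≤ p j) {a : ℝ} (ha : 0 < a) :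
    ∃ C > 0, ∀ (L : ℝ) (S : Finset (ι → ℕ)), 0 ≤ L → (∀ k ∈ S, L ≤ ∑ j, w j * k j) →
      ∑ k ∈ S, expPolyWeight (fun j => -a * w j + b j) p k ≤
        C * Real.exp (-(a * L)) * (L + 1) ^ ((J.card : ℝ) - 1 + ∑ j ∈ J, p j) := by
  obtain ⟨C, hC, hsum⟩ := exists_sum_exp_neg_mul_abs_mul_expPolyWeight_le hw hb hJ hbJ hp ha
  refine ⟨C, hC, fun L S hL hS => ?_⟩
  calc _ = Real.exp (-(a * L)) *
          ∑ k ∈ S, Real.exp (-(a * |∑ j, w j * k j - L|)) * expPolyWeight b p k := by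
        rw [Finset.mul_sum]
        refine Finset.sum_congr rfl fun k hk => ?_
        rw [expPolyWeight_mul_add, ← mul_assoc, ← Real.exp_add,
          abs_of_nonneg (sub_nonneg.2 (hS k hk))]
        ring_nf
    _ ≤ _ := mul_le_mul_of_nonneg_left (hsum L S hL) (Real.exp_pos _).le
    _ = _ := by ring

theorem exists_sum_expPolyWeight_le_of_forall_le (hw : ∀ j, 0 < w j) (hb : ∀ j, b j ≤ 0)
    (hJ : J.Nonempty) (hbJ : ∀ j ∉ J, b j < 0) (hp : ∀ j ∈ J, 0 ≤ p j) {a : ℝ} (ha : 0 < a) :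
    ∃ C > 0, ∀ (L : ℝ) (S : Finset (ι → ℕ)), 0 ≤ L → (∀ k ∈ S, ∑ j, w j * k j ≤ L) →
      ∑ k ∈ S, expPolyWeight (fun j => a * w j + b j) p k ≤
        C * Real.exp (a * L) * (L + 1) ^ ((J.card : ℝ) - 1 + ∑ j ∈ J, p j) := by
  obtain ⟨C, hC, hsum⟩ := exists_sum_exp_neg_mul_abs_mul_expPolyWeight_le hw hb hJ hbJ hp ha
  refine ⟨C, hC, fun L S hL hS => ?_⟩
  calc _ = Real.exp (a * L) *
          ∑ k ∈ S, Real.exp (-(a * |∑ j, w j * k j - L|)) * expPolyWeight b p k := by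
        rw [Finset.mul_sum]
        refine Finset.sum_congr rfl fun k hk => ?_
        rw [expPolyWeight_mul_add, ← mul_assoc, ← Real.exp_add,
          abs_of_nonpos (sub_nonpos.2 (hS k hk))]
        ring_nf
    _ ≤ _ := mul_le_mul_of_nonneg_left (hsum L S hL) (Real.exp_pos _).le
    _ = _ := by ring

end Concentration

section Truncation

variable {w b p : ι → ℝ} {J : Finset ι} {Y : Type*} [SeminormedAddCommGroup Y]

/-- The multi-indices `k` with `∑ j, w j * k j ≤ L`, that is, the index set `I_L` of Smolyak's
algorithm with weights `w`. The surrounding box, in which they lie if all `w j` are positive,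
makes it a `Finset`. -/
noncomputable def weightedSimplex (w : ι → ℝ) (L : ℝ) : Finset (ι → ℕ) :=
  (Fintype.piFinset fun j => Finset.range (⌊L / w j⌋₊ + 1)).filter fun k => ∑ j, w j * k j ≤ L

theorem mem_weightedSimplex (hw : ∀ j, 0 < w j) {L : ℝ} {k : ι → ℕ} :
    k ∈ weightedSimplex w L ↔ ∑ j, w j * k j ≤ L := by
  refine Finset.mem_filter.trans (and_iff_right_of_imp fun hk => Fintype.mem_piFinset.2 fun j =>
    Finset.mem_range_succ_iff.2 (Nat.le_floor ((le_div_iff₀' (hw j)).2 (hk.trans' ?_))))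
  exact Finset.single_le_sum (f := fun i => w i * (k i : ℝ))
    (fun i _ => mul_nonneg (hw i).le (Nat.cast_nonneg _)) (Finset.mem_univ j)

theorem tsum_ite_sum_mul_le_eq_sum {X : Type*} [AddCommMonoid X] [TopologicalSpace X]
    (hw : ∀ j, 0 < w j) (f : (ι → ℕ) → X) (L : ℝ) :
    ∑' k, (if ∑ j, w j * k j ≤ L then f k else 0) = ∑ k ∈ weightedSimplex w L, f k := by
  simp only [← mem_weightedSimplex hw]
  rw [tsum_eq_sum fun k hk => if_neg hk, Finset.sum_ite_mem, Finset.inter_self]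

theorem norm_sum_sub_le_of_hasSum {α : Type*} {f : α → Y} {y : Y} (hf : HasSum f y) {S : Finset α}
    {B : ℝ} (hB : ∀ T : Finset α, (∀ k ∈ T, k ∉ S) → ∑ k ∈ T, ‖f k‖ ≤ B) :
    ‖∑ k ∈ S, f k - y‖ ≤ B := by
  rw [norm_sub_rev]
  refine le_of_tendsto (hf.sub_const (∑ k ∈ S, f k)).norm ?_
  filter_upwards [Filter.eventually_ge_atTop S] with T hST
  rw [← Finset.sum_sdiff_eq_sub hST]
  exact (norm_sum_le _ _).trans (hB _ fun k hk => (Finset.mem_sdiff.1 hk).2)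

theorem exists_norm_sum_weightedSimplex_sub_le (hw : ∀ j, 0 < w j) (hb : ∀ j, b j ≤ 0)
    (hJ : J.Nonempty) (hbJ : ∀ j ∉ J, b j < 0) (hp : ∀ j ∈ J, 0 ≤ p j) {a : ℝ} (ha : 0 < a) :
    ∃ C > 0, ∀ (L κ : ℝ) (f : (ι → ℕ) → Y) (y : Y), 0 ≤ L → 0 ≤ κ → HasSum f y →
      (∀ k, ‖f k‖ ≤ κ * expPolyWeight (fun j => -a * w j + b j) p k) →
      ‖∑ k ∈ weightedSimplex w L, f k - y‖ ≤
        κ * (C * Real.exp (-(a * L)) * (L + 1) ^ ((J.card : ℝ) - 1 + ∑ j ∈ J, p j)) := by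
  obtain ⟨C, hC, htail⟩ := exists_sum_expPolyWeight_le_of_forall_ge hw hb hJ hbJ hp ha
  refine ⟨C, hC, fun L κ f y hL hκ hy hf => norm_sum_sub_le_of_hasSum hy fun T hT => ?_⟩
  calc ∑ k ∈ T, ‖f k‖ ≤ κ * ∑ k ∈ T, expPolyWeight (fun j => -a * w j + b j) p k := by
        rw [Finset.mul_sum]
        exact Finset.sum_le_sum fun k _ => hf k
    _ ≤ _ := by
        refine mul_le_mul_of_nonneg_left (htail L T hL fun k hk => ?_) hκ
        exact (not_le.1 (mt (mem_weightedSimplex hw).2 (hT k hk))).le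

theorem exists_eventually_error_le_and_work_le (hw : ∀ j, 0 < w j) (hb : ∀ j, b j ≤ 0)
    (hJ : J.Nonempty) (hbJ : ∀ j ∉ J, b j < 0) (hp : ∀ j ∈ J, 0 ≤ p j) {q : ι → ℝ}
    (hq : ∀ j ∈ J, 0 ≤ q j) {a ρ : ℝ} (ha : 0 < a) (hρ : 0 < ρ) :
    ∃ C > 0, ∀ κ > 0, ∀ f : (ι → ℕ) → Y,
      (∀ k, ‖f k‖ ≤ κ * expPolyWeight (fun j => -a * w j + b j) p k) → ∀ y, HasSum f y →
      ∀ᶠ ε in 𝓝[>] (0 : ℝ), ∃ L > 0, ‖∑ k ∈ weightedSimplex w L, f k - y‖ ≤ ε ∧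
        ∑ k ∈ weightedSimplex w L, expPolyWeight (fun j => ρ * a * w j + b j) q k ≤
          C * κ ^ ρ * ε ^ (-ρ) * |Real.log ε| ^
            (((J.card : ℝ) - 1) * (1 + ρ) + ρ * ∑ j ∈ J, p j + ∑ j ∈ J, q j) := by
  obtain ⟨A, hA, herror⟩ := exists_norm_sum_weightedSimplex_sub_le (Y := Y) hw hb hJ hbJ hp ha
  obtain ⟨B, hB, hwork⟩ :=
    exists_sum_expPolyWeight_le_of_forall_le hw hb hJ hbJ hq (mul_pos hρ ha)
  have hcard : (0 : ℝ) ≤ J.card - 1 := sub_nonneg.2 (by exact_mod_cast hJ.card_pos)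
  set P := (J.card : ℝ) - 1 + ∑ j ∈ J, p j with hP_def
  set R := (J.card : ℝ) - 1 + ∑ j ∈ J, q j with hR_def
  have hP : 0 ≤ P := add_nonneg hcard (Finset.sum_nonneg hp)
  have hR : 0 ≤ R := add_nonneg hcard (Finset.sum_nonneg hq)
  refine ⟨B * (A * (2 / a) ^ P) ^ ρ * (2 / a) ^ R, by positivity, fun κ hκ f hf y hy => ?_⟩
  filter_upwards [eventually_exists_level ρ ha (mul_pos hκ hA) hP hR] with ε ⟨L, hL, hLe, hLw⟩
  refine ⟨L, hL, (herror L κ f y hL.le hκ.le hy hf).trans (hLe.trans_eq' (by ring)), ?_⟩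
  calc _ ≤ B * Real.exp (ρ * a * L) * (L + 1) ^ R :=
        hwork L _ hL.le fun k => (mem_weightedSimplex hw).1
    _ = B * (Real.exp (ρ * a * L) * (L + 1) ^ R) := mul_assoc _ _ _
    _ ≤ _ := mul_le_mul_of_nonneg_left hLw hB.le
    _ = _ := by
        rw [mul_assoc κ, Real.mul_rpow hκ.le (by positivity), hP_def, hR_def]
        ring_nf

end Truncation

theorem smolyak_breaks_curse_of_dimensionality_general {Y : Type*} [SeminormedAddCommGroup Y]
    (β β' γ γ' : ι → ℝ) (hβ : ∀ j, 0 < β j) (hβγ : ∀ j, 0 < β j + γ j) {ρ : ℝ} (hρ : 0 < ρ)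
    (hρmem : ∃ j, γ j / β j = ρ) (hρub : ∀ j, γ j / β j ≤ ρ)
    (hβ' : ∀ j, γ j / β j = ρ → 0 ≤ β' j) (hγ' : ∀ j, γ j / β j = ρ → 0 ≤ γ' j) :
    ∃ C > 0, ∀ κ₁ κ₂ : ℝ, 0 < κ₁ → 0 ≤ κ₂ → ∀ f : (ι → ℕ) → Y,
      (∀ k, ‖f k‖ ≤ κ₁ * expPolyWeight (fun j => -β j) β' k) → ∀ y, HasSum f y →
      ∃ ε₀ > 0, ∀ ε : ℝ, 0 < ε → ε ≤ ε₀ → ∃ L > 0,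
        ‖∑ k ∈ weightedSimplex (fun j => β j + γ j) L, f k - y‖ ≤ ε ∧
        ∑ k ∈ weightedSimplex (fun j => β j + γ j) L, κ₂ * expPolyWeight γ γ' k ≤
          C * κ₁ ^ ρ * κ₂ * ε ^ (-ρ) * |Real.log ε| ^
            ((((Finset.univ.filter fun j => γ j / β j = ρ).card : ℝ) - 1) * (1 + ρ) +
              ρ * (∑ j ∈ Finset.univ.filter fun j => γ j / β j = ρ, β' j) +
              (∑ j ∈ Finset.univ.filter fun j => γ j / β j = ρ, γ' j)) := by
  set J := Finset.univ.filter fun j => γ j / β j = ρ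
  have hmem (j : ι) : j ∈ J ↔ γ j / β j = ρ := by simp [J]
  let a := 1 / (1 + ρ)
  let b (j : ι) : ℝ := (γ j - ρ * β j) / (1 + ρ)
  have hb (j : ι) : b j ≤ 0 :=
    div_nonpos_of_nonpos_of_nonneg (sub_nonpos.2 ((div_le_iff₀ (hβ j)).1 (hρub j))) (by positivity)
  have hbJ (j : ι) (hj : j ∉ J) : b j < 0 :=
    div_neg_of_neg_of_pos (sub_neg.2 ((div_lt_iff₀ (hβ j)).1
      ((hρub j).lt_of_ne (mt (hmem j).2 hj)))) (by positivity)
  have hdecay (j : ι) : -a * (β j + γ j) + b j = -β j := by simp only [a, b]; field_simp; ring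
  have hgrowth (j : ι) : ρ * a * (β j + γ j) + b j = γ j := by simp only [a, b]; field_simp; ring
  obtain ⟨C, hC, h⟩ := exists_eventually_error_le_and_work_le (Y := Y) hβγ hb
    (hρmem.imp fun j => (hmem j).2) hbJ (fun j hj => hβ' j ((hmem j).1 hj))
    (fun j hj => hγ' j ((hmem j).1 hj)) (a := a) (by positivity) hρ
  simp only [hdecay, hgrowth] at h
  refine ⟨C, hC, fun κ₁ κ₂ hκ₁ hκ₂ f hf y hy => ?_⟩
  obtain ⟨ε₀, hε₀, hlevel⟩ := mem_nhdsGT_iff_exists_Ioc_subset.1 (h κ₁ hκ₁ f hf y hy)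
  refine ⟨ε₀, hε₀, fun ε hε hεε₀ => ?_⟩
  obtain ⟨L, hL, herror, hwork⟩ := hlevel ⟨hε, hεε₀⟩
  refine ⟨L, hL, herror, ?_⟩
  rw [← Finset.mul_sum]
  exact (mul_le_mul_of_nonneg_left hwork hκ₂).trans_eq (by ring)

end ExpPolyWeight

/-- main theorem: breaking the curse of dimensionality: under the
decay bound `‖(Δ_mix M)(k)‖ ≤ ∏_j K_{j,1} exp(-β_j k_j)(k_j+1)^{β'_j}` and with
work bounds `∏_j K_{j,2} exp(γ_j k_j)(k_j+1)^{γ'_j}`, setting `ρ = max_j γ_j/β_j`,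
`J = {j : γ_j/β_j = ρ}`, `d* = |J|`, `β'* = ∑_{j∈J} β'_j`, `γ'* = ∑_{j∈J} γ'_j`,
`K₁ = ∏_j K_{j,1}`, `K₂ = ∏_j K_{j,2}`, there are `C = C(β,γ,β',γ',d) > 0` and
`ε₀ > 0` such that for all `0 < ε ≤ ε₀` there is `L > 0` with
`‖S_{I_L}(M) - M_∞‖ ≤ ε` and
`work(S_{I_L}(M)) ≤ C K₁^ρ K₂ ε^{-ρ} |log ε|^{(d*-1)(1+ρ)+ρβ'*+γ'*}`, where
`I_L = {k : ∑_j (β_j+γ_j)k_j ≤ L}`. -/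
theorem smolyak_breaks_curse_of_dimensionality
    {d : ℕ} (hd : 1 ≤ d) {Y : Type*} [NormedAddCommGroup Y] [NormedSpace ℝ Y]
    [CompleteSpace Y]
    (β β' γ γ' : Fin d → ℝ)
    (hβ : ∀ j, 0 < β j) (hβ' : ∀ j, 0 ≤ β' j)
    (hγ : ∀ j, 0 < γ j) (hγ' : ∀ j, 0 ≤ γ' j)
    (ρ : ℝ) (hρmem : ∃ j, γ j / β j = ρ) (hρub : ∀ j, γ j / β j ≤ ρ) :
    ∃ C > (0 : ℝ),
      ∀ K1 K2 : Fin d → ℝ, (∀ j, 0 < K1 j) → (∀ j, 0 < K2 j) →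
      ∀ M : (Fin d → ℕ) → Y,
      (∀ k : Fin d → ℕ, ‖mixDiff M k‖ ≤
        ∏ j, K1 j * Real.exp (-β j * (k j : ℝ)) * ((k j : ℝ) + 1) ^ (β' j)) →
      ∀ Minf : Y, HasSum (mixDiff M) Minf →
      ∃ ε₀ > (0 : ℝ), ∀ ε : ℝ, 0 < ε → ε ≤ ε₀ →
        ∃ L > (0 : ℝ),
          ‖(∑' k : Fin d → ℕ,
              if ∑ j, (β j + γ j) * (k j : ℝ) ≤ L then mixDiff M k else 0) - Minf‖
            ≤ ε ∧
          (∑' k : Fin d → ℕ,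
            if ∑ j, (β j + γ j) * (k j : ℝ) ≤ L
            then ∏ j, K2 j * Real.exp (γ j * (k j : ℝ)) * ((k j : ℝ) + 1) ^ (γ' j)
            else 0) ≤
          C * (∏ j, K1 j) ^ ρ * (∏ j, K2 j) * ε ^ (-ρ) *
            |Real.log ε| ^
              ((((Finset.univ.filter fun j => γ j / β j = ρ).card : ℝ) - 1) * (1 + ρ) +
                ρ * (∑ j ∈ Finset.univ.filter fun j => γ j / β j = ρ, β' j) +
                (∑ j ∈ Finset.univ.filter fun j => γ j / β j = ρ, γ' j)) := by
  obtain ⟨C, hC, h⟩ := smolyak_breaks_curse_of_dimensionality_general (Y := Y) β β' γ γ' hβ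
    (fun j => add_pos (hβ j) (hγ j)) (hρmem.elim fun j hj => hj ▸ div_pos (hγ j) (hβ j)) hρmem hρub
    (fun j _ => hβ' j) (fun j _ => hγ' j)
  simp only [prod_mul_exp_mul_rpow, tsum_ite_sum_mul_le_eq_sum fun j => add_pos (hβ j) (hγ j)]
  exact ⟨C, hC, fun K1 K2 hK1 hK2 M => h _ _ (Finset.prod_pos fun j _ => hK1 j)
    (Finset.prod_nonneg fun j _ => (hK2 j).le) (mixDiff M)⟩
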